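/- Let f = (f_1,…,f_m) be homogeneous polynomials defining a section of L^{d_1} ⊕ ⋯ ⊕ L^{d_m} on ℙ^n with m ≤ n, and suppose the common zero set Z of f in ℙ^n has codimension m. If a homogeneous polynomial φ of degree r lies, at every point of the affine chart ℂ^n, in the ideal generated locally by f_1,…,f_m in the ring of germs of holomorphic functions, and Z ∩ {z_0 = 0} has codimension m+1 in ℙ^n, then φ lies in the local ideal generated by f_1,…,f_m at every point of ℙ^n, including points of {z_0=0}. -/

import Mathlib

open MvPolynomial Filter

/-!
Replacing analytic coefficients by Taylor polynomials puts `φ` in `I + 𝔪ₓᵏ` for every `k`, where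
`I = (f₁, …, fₘ)`; by Krull's intersection theorem, `s φ ∈ I` for some polynomial `s` with
`s(x) ≠ 0`. If this holds wherever `ℓ ≠ 0`, the Nullstellensatz gives `ℓᵏ φ ∈ I`. As
`f₁, …, fₘ, ℓ` cut the dimension down by `m + 1`, they form a regular sequence in the
Cohen–Macaulay local ring at each of their common zeros, so `ℓ` is a nonzerodivisor modulo `I`.
Hence `φ ∈ I`, and germ membership follows at every point.
-/

section Depth

open IsLocalRing RingTheory.Sequence Module Pointwise

variable {A M : Type*} [CommRing A] [AddCommGroup M] [Module A M]

lemma torsionBySet_ne_bot_of_mem_associatedPrimes [IsNoetherianRing A] {p : Ideal A}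
    (hp : p ∈ associatedPrimes A M) : Submodule.torsionBySet A M p ≠ ⊥ := by
  obtain ⟨hprime, x, rfl⟩ := isAssociatedPrime_iff.1 hp
  refine fun hbot => hprime.ne_top (Ideal.eq_top_of_isUnit_mem _ (x := 1) ?_ isUnit_one)
  have hx : x ∈ Submodule.torsionBySet A M ((⊥ : Submodule A M).colon {x} : Ideal A) :=
    (Submodule.mem_torsionBySet_iff _ _).2 fun a =>
      (Submodule.mem_bot A).1 (Submodule.mem_colon_singleton.1 a.2)
  rw [hbot, Submodule.mem_bot] at hx
  simp [Submodule.mem_colon_singleton, hx]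

lemma torsionBySet_le_smul_of_le_smul_top {y : A} (hreg : IsSMulRegular M y) {I J : Ideal A}
    (hy : y ∈ J) (hle : Submodule.torsionBySet A M I ≤ y • ⊤) :
    Submodule.torsionBySet A M I ≤ J • Submodule.torsionBySet A M I := by
  intro x hx
  obtain ⟨z, -, rfl⟩ := (Submodule.mem_smul_pointwise_iff_exists _ _ _).1 (hle hx)
  refine Submodule.smul_mem_smul hy ((Submodule.mem_torsionBySet_iff _ _).2 fun a => hreg ?_)
  change y • (a • z) = y • (0 : M)
  rw [smul_zero, smul_comm]
  exact (Submodule.mem_torsionBySet_iff _ _).1 hx a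

lemma isSMulRegular_iff_forall_notMem_associatedPrimes [IsNoetherianRing A] {a : A} :
    IsSMulRegular M a ↔ ∀ p ∈ associatedPrimes A M, a ∉ p := by
  have h := Set.ext_iff.1 (biUnion_associatedPrimes_eq_compl_regular A M) a
  simp only [Set.mem_iUnion, SetLike.mem_coe, exists_prop, Set.mem_compl_iff,
    Set.mem_ofPred_eq] at h
  rw [← not_iff_not, ← h]
  push Not
  rfl

lemma ringKrullDim_quotient_le_supportDim_quotSMulTop [Module.Finite A M] {a : A}
    {p : Ideal A} (hp : p ∈ associatedPrimes A M) (hap : a ∈ p) :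
    ringKrullDim (A ⧸ p) ≤ supportDim A (QuotSMulTop a M) := by
  have hann : Module.annihilator A M ≤ p := by
    simpa only [Submodule.annihilator_top] using IsAssociatedPrime.annihilator_le hp
  have hsub : PrimeSpectrum.zeroLocus (p : Set A) ⊆ Module.support A (QuotSMulTop a M) := by
    rw [Module.support_quotSMulTop, Module.support_eq_zeroLocus]
    exact fun q hq => ⟨hann.trans hq, Set.singleton_subset_iff.2 (hq hap)⟩
  rw [ringKrullDim_quotient, Module.supportDim]
  exact Order.krullDim_le_of_strictMono (Set.inclusion hsub) fun _ _ h => h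

variable [IsLocalRing A]

/-- The maximal ideal of `A` contains an `M`-regular sequence of length `n`, that is,
`depth M ≥ n`. -/
def HasDepthAtLeast (A M : Type*) [CommRing A] [IsLocalRing A] [AddCommGroup M] [Module A M]
    (n : ℕ) : Prop :=
  ∃ rs : List A, rs.length = n ∧ (∀ r ∈ rs, r ∈ maximalIdeal A) ∧ IsRegular M rs

lemma maximalIdeal_smul_top_lt [Module.Finite A M] [Nontrivial M] :
    maximalIdeal A • (⊤ : Submodule A M) < ⊤ :=
  (Submodule.top_ne_ideal_smul_of_le_jacobson_annihilator
    (maximalIdeal_le_jacobson _)).symm.lt_top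

variable [IsNoetherianRing A] [Module.Finite A M]

-- By Nakayama, some `p`-torsion element survives in `M ⧸ yM`.
lemma exists_mem_associatedPrimes_quotSMulTop {y : A} (hy : y ∈ maximalIdeal A)
    (hreg : IsSMulRegular M y) {p : Ideal A} (hp : p ∈ associatedPrimes A M) :
    ∃ q ∈ associatedPrimes A (QuotSMulTop y M), p ≤ q ∧ y ∈ q := by
  obtain ⟨x, hxp, hxy⟩ : ∃ x ∈ Submodule.torsionBySet A M p, x ∉ (y • ⊤ : Submodule A M) := by
    refine SetLike.not_le_iff_exists.1 fun hle => torsionBySet_ne_bot_of_mem_associatedPrimes hp ?_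
    exact Submodule.eq_bot_of_le_smul_of_le_jacobson_bot _ _ (IsNoetherian.noetherian _)
      (torsionBySet_le_smul_of_le_smul_top hreg hy hle) (maximalIdeal_le_jacobson _)
  have mk_ne_zero : (Submodule.Quotient.mk x : QuotSMulTop y M) ≠ 0 := fun h =>
    hxy ((Submodule.Quotient.mk_eq_zero _).1 h)
  obtain ⟨q, hq, hle⟩ := exists_le_isAssociatedPrime_of_isNoetherianRing A _ mk_ne_zero
  refine ⟨q, hq, fun a ha => hle ?_, hle ?_⟩ <;>
    rw [Submodule.mem_colon_singleton, ← Submodule.Quotient.mk_smul, Submodule.mem_bot,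
      Submodule.Quotient.mk_eq_zero]
  · rw [(Submodule.mem_torsionBySet_iff _ _).1 hxp ⟨a, ha⟩]
    exact zero_mem _
  · exact Submodule.smul_mem_pointwise_smul _ _ _ trivial

-- Ischebeck's inequality: each regular element moves `p` to a strictly larger associated prime.
lemma HasDepthAtLeast.le_ringKrullDim_quotient {n : ℕ} (hM : HasDepthAtLeast A M n)
    {p : Ideal A} (hp : p ∈ associatedPrimes A M) : (n : WithBot ℕ∞) ≤ ringKrullDim (A ⧸ p) := by
  obtain ⟨rs, rfl, hrs, hreg⟩ := hM
  induction rs generalizing M p with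
  | nil =>
    have : p.IsPrime := hp.1
    simpa using ringKrullDim_nonneg_of_nontrivial (R := A ⧸ p)
  | cons y ys ih =>
    obtain ⟨hy, hys⟩ := List.forall_mem_cons.1 hrs
    obtain ⟨hy_reg, hys_reg⟩ := (isRegular_cons_iff M y ys).1 hreg
    have : p.IsPrime := hp.1
    obtain ⟨q, hq, hpq, hyq⟩ := exists_mem_associatedPrimes_quotSMulTop hy hy_reg hp
    have hyp : y ∉ p := isSMulRegular_iff_forall_notMem_associatedPrimes.1 hy_reg p hp
    calc ((y :: ys).length : WithBot ℕ∞) = ys.length + 1 := by simp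
      _ ≤ ringKrullDim (A ⧸ q) + 1 := by gcongr; exact ih hq hys hys_reg
      _ ≤ ringKrullDim (A ⧸ p) :=
        ringKrullDim_succ_le_of_surjective (Ideal.Quotient.factor hpq)
          (Ideal.Quotient.factor_surjective hpq) (r := Ideal.Quotient.mk p y)
          (mem_nonZeroDivisors_of_ne_zero (by rwa [Ne, Ideal.Quotient.eq_zero_iff_mem]))
          (by rwa [Ideal.Quotient.factor_mk, Ideal.Quotient.eq_zero_iff_mem])

lemma supportDim_le_supportDim_quotient_ofList_add_length {as : List A}
    (has : ∀ a ∈ as, a ∈ maximalIdeal A) :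
    supportDim A M ≤ supportDim A (M ⧸ (Ideal.ofList as • ⊤ : Submodule A M)) + as.length := by
  induction as generalizing M with
  | nil =>
    rw [supportDim_eq_of_equiv (Submodule.quotEquivOfEqBot (Ideal.ofList ([] : List A) • ⊤)
      (by rw [Ideal.ofList_nil, Submodule.bot_smul]))]
    simp
  | cons a as ih =>
    obtain ⟨ha, has⟩ := List.forall_mem_cons.1 has
    rw [supportDim_eq_of_equiv (Submodule.quotOfListConsSMulTopEquivQuotSMulTopInner M a as)]
    refine (supportDim_le_supportDim_quotSMulTop_succ ha).trans ?_
    rw [List.length_cons, Nat.cast_add, Nat.cast_one, ← add_assoc]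
    gcongr
    exact ih has

end Depth

section SystemOfParameters

open IsLocalRing RingTheory.Sequence CategoryTheory Abelian Module Pointwise

universe u

variable {A M : Type u} [CommRing A] [IsLocalRing A] [IsNoetherianRing A]
  [AddCommGroup M] [Module A M] [Module.Finite A M]

lemma HasDepthAtLeast.quotSMulTop {n : ℕ} {a : A} (hM : HasDepthAtLeast A M (n + 1))
    (ha : a ∈ maximalIdeal A) (hreg : IsSMulRegular M a) :
    HasDepthAtLeast A (QuotSMulTop a M) n := by
  have : Nontrivial M := hM.choose_spec.2.2.nontrivial
  have : Nontrivial (QuotSMulTop a M) := nontrivial_quotSMulTop_of_mem_maximalIdeal M ha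
  have ext_M := ((ModuleCat.exists_isRegular_tfae (maximalIdeal A) (n + 1) (ModuleCat.of A M)
    maximalIdeal_smul_top_lt).out 3 1).1 hM
  refine ((ModuleCat.exists_isRegular_tfae (maximalIdeal A) n
    (ModuleCat.of A (QuotSMulTop a M)) maximalIdeal_smul_top_lt).out 1 3).1 fun i hi => ?_
  exact AddCommGrpCat.subsingleton_of_isZero <| ShortComplex.Exact.isZero_of_both_zeros
    (Ext.covariant_sequence_exact₃' _
      (IsSMulRegular.smulShortComplex_shortExact (M := ModuleCat.of A M) hreg) i (i + 1) rfl)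
    ((AddCommGrpCat.isZero_of_iff_subsingleton.2 (ext_M i (by omega))).eq_zero_of_src _)
    ((AddCommGrpCat.isZero_of_iff_subsingleton.2 (ext_M (i + 1) (by omega))).eq_zero_of_tgt _)

-- An `a` killing a nonzero element of `M` would lie in an associated prime, whose dimension is
-- at least the depth; cutting by the remaining parameters would leave too large a support.
lemma HasDepthAtLeast.isWeaklyRegular {d : ℕ} {as : List A}
    (hM : HasDepthAtLeast A M (d + as.length)) (has : ∀ a ∈ as, a ∈ maximalIdeal A)
    (hdim : supportDim A (M ⧸ (Ideal.ofList as • ⊤ : Submodule A M)) ≤ d) :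
    IsWeaklyRegular M as := by
  induction as generalizing M with
  | nil => exact IsWeaklyRegular.nil A M
  | cons a as ih =>
    obtain ⟨ha, has⟩ := List.forall_mem_cons.1 has
    rw [supportDim_eq_of_equiv (Submodule.quotOfListConsSMulTopEquivQuotSMulTopInner M a as)]
      at hdim
    have hreg : IsSMulRegular M a := by
      refine isSMulRegular_iff_forall_notMem_associatedPrimes.2 fun p hp hap => ?_
      have hle : ((d + (as.length + 1) : ℕ) : WithBot ℕ∞) ≤ (d + as.length : ℕ) :=
        calc ((d + (as.length + 1) : ℕ) : WithBot ℕ∞)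
          _ ≤ ringKrullDim (A ⧸ p) := hM.le_ringKrullDim_quotient hp
          _ ≤ supportDim A (QuotSMulTop a M) :=
            ringKrullDim_quotient_le_supportDim_quotSMulTop hp hap
          _ ≤ _ + as.length := supportDim_le_supportDim_quotient_ofList_add_length has
          _ ≤ (d + as.length : ℕ) := by rw [Nat.cast_add]; gcongr
      have : d + (as.length + 1) ≤ d + as.length := by exact_mod_cast hle
      omega
    exact (isWeaklyRegular_cons_iff M a as).2 ⟨hreg, ih (hM.quotSMulTop ha hreg) has hdim⟩

end SystemOfParameters

section Dimension

lemma ringKrullDim_quotient_le_of_forall_minimalPrimes {R : Type*} [CommRing R] {K : Ideal R}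
    {e : WithBot ℕ∞} (hK : ∀ q ∈ K.minimalPrimes, ringKrullDim (R ⧸ q) ≤ e) :
    ringKrullDim (R ⧸ K) ≤ e := by
  rw [ringKrullDim_quotient]
  refine iSup_le fun l => ?_
  obtain ⟨q, hq, hq_le⟩ := Ideal.exists_minimalPrimes_le l.head.2
  refine le_trans ?_ (hK q hq)
  rw [ringKrullDim_quotient]
  have hmem : ∀ i, q ≤ (l i).1.asIdeal := fun i => hq_le.trans (l.monotone (Fin.zero_le i))
  exact Order.LTSeries.length_le_krullDim
    (⟨l.length, fun i => ⟨(l i).1, hmem i⟩, l.step⟩ :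
      LTSeries (PrimeSpectrum.zeroLocus (q : Set R)))

lemma ringKrullDim_quotient_map_le_of_isLocalization {R A : Type*} [CommRing R] [CommRing A]
    [Algebra R A] (M : Submonoid R) [IsLocalization M A] (K : Ideal R) :
    ringKrullDim (A ⧸ K.map (algebraMap R A)) ≤ ringKrullDim (R ⧸ K) := by
  rw [ringKrullDim_quotient, ringKrullDim_quotient]
  refine Order.krullDim_le_of_strictMono (fun q => ⟨PrimeSpectrum.comap (algebraMap R A) q.1,
    Ideal.map_le_iff_le_comap.1 q.2⟩) (Monotone.strictMono_of_injective ?_ ?_)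
  · exact fun q q' hqq' => Ideal.comap_mono hqq'
  · exact fun q q' hqq' => Subtype.ext
      (PrimeSpectrum.localization_comap_injective A M (congrArg Subtype.val hqq'))

end Dimension

section RationalPoint

open RingTheory.Sequence

variable {σ K : Type*} [CommRing K]

open Classical in
/-- Substitution of the coordinates of `x` for the variables in `S`; its kernel is generated by the
`X i - C (x i)` with `i ∈ S`. -/
noncomputable def partialEval (x : σ → K) (S : Set σ) : MvPolynomial σ K →ₐ[K] MvPolynomial σ K :=
  aeval fun i => if i ∈ S then C (x i) else X i

lemma mem_span_X_sub_C_image_iff (x : σ → K) (S : Set σ) (g : MvPolynomial σ K) :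
    g ∈ Ideal.span ((fun i => X i - C (x i)) '' S) ↔ partialEval x S g = 0 := by
  classical
  have hgen : ∀ i ∈ S, (X i - C (x i) : MvPolynomial σ K) ∈
      Ideal.span ((fun i => X i - C (x i)) '' S) := fun i hi => Ideal.subset_span ⟨i, hi, rfl⟩
  constructor
  · suffices h : Ideal.span ((fun i => X i - C (x i)) '' S) ≤ RingHom.ker (partialEval x S) from
      fun hg => h hg
    rw [Ideal.span_le]
    rintro _ ⟨i, hi, rfl⟩
    simp [partialEval, RingHom.mem_ker, hi]
  · have hmk : (Ideal.Quotient.mkₐ K (Ideal.span ((fun i => X i - C (x i)) '' S))).comp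
        (partialEval x S) = Ideal.Quotient.mkₐ K _ := by
      ext i
      by_cases hi : i ∈ S
      · simpa [partialEval, hi] using (Ideal.Quotient.eq.2 (hgen i hi)).symm
      · simp [partialEval, hi]
    intro hg
    rw [← Ideal.Quotient.eq_zero_iff_mem, ← Ideal.Quotient.mkₐ_eq_mk K, ← hmk]
    simp [hg]

lemma isWeaklyRegular_map_X_sub_C [IsDomain K] (x : σ → K) {l : List σ} (hl : l.Nodup) :
    IsWeaklyRegular (MvPolynomial σ K) (l.map fun i => X i - C (x i)) := by
  induction l using List.reverseRecOn with
  | nil => exact IsWeaklyRegular.nil _ _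
  | append_singleton l i ih =>
    obtain ⟨hl, -, hdisj⟩ := List.nodup_append.1 hl
    have hi : i ∉ l := fun hi => hdisj i hi i (List.mem_singleton_self i) rfl
    have hideal : (Ideal.ofList (l.map fun i => X i - C (x i)) :
        Ideal (MvPolynomial σ K)) = Ideal.span ((fun i => X i - C (x i)) '' {j | j ∈ l}) := by
      rw [Ideal.ofList]
      congr 1
      ext g
      simp
    rw [List.map_append, List.map_singleton, isWeaklyRegular_append_iff,
      isWeaklyRegular_singleton_iff, isSMulRegular_quotient_iff_mem_of_smul_mem, smul_eq_mul,
      Ideal.mul_top, hideal]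
    refine ⟨ih hl, fun g hg => ?_⟩
    rw [smul_eq_mul, mem_span_X_sub_C_image_iff, map_mul] at hg
    rw [mem_span_X_sub_C_image_iff]
    refine (mul_eq_zero.1 hg).resolve_left ?_
    have : partialEval x {j | j ∈ l} (X i - C (x i)) = X i - C (x i) := by
      simp [partialEval, hi]
    rw [this]
    exact fun h => by simpa using congrArg (eval fun _ => x i + 1) h

end RationalPoint

section Unmixedness

open IsLocalRing RingTheory.Sequence

variable {σ ι K : Type*} [Field K]

/-- The maximal ideal of polynomials vanishing at the rational point `x`. -/
noncomputable abbrev pointIdeal (x : σ → K) : Ideal (MvPolynomial σ K) :=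
  RingHom.ker (eval x)

instance (x : σ → K) : (pointIdeal x).IsPrime := RingHom.ker_isPrime _

lemma exists_pow_mul_mem_of_forall_eval_ne_zero [Finite σ] [IsAlgClosed K]
    {I : Ideal (MvPolynomial σ K)} {ℓ φ : MvPolynomial σ K}
    (h : ∀ x, eval x ℓ ≠ 0 → ∃ s, eval x s ≠ 0 ∧ s * φ ∈ I) : ∃ k : ℕ, ℓ ^ k * φ ∈ I := by
  suffices hℓ : ℓ ∈ (I.colon {φ} : Ideal _).radical by
    obtain ⟨k, hk⟩ := hℓ
    exact ⟨k, Submodule.mem_colon_singleton.1 hk⟩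
  rw [← vanishingIdeal_zeroLocus_eq_radical (K := K), mem_vanishingIdeal_iff]
  intro x hx
  by_contra hne
  obtain ⟨s, hs, hsφ⟩ := h x (by rwa [aeval_eq_eval] at hne)
  exact hs (by simpa [aeval_eq_eval] using hx s (Submodule.mem_colon_singleton.2 hsφ))

variable [Fintype σ]

lemma hasDepthAtLeast_localization_pointIdeal (x : σ → K) :
    HasDepthAtLeast (Localization.AtPrime (pointIdeal x)) (Localization.AtPrime (pointIdeal x))
      (Fintype.card σ) := by
  have hmem : ∀ g ∈ (Finset.univ : Finset σ).toList.map fun i => X i - C (x i),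
      g ∈ pointIdeal x := by
    simp [RingHom.mem_ker]
  refine ⟨_, ?_, ?_, (isWeaklyRegular_map_X_sub_C x Finset.univ.nodup_toList
    ).isRegular_of_isLocalization_of_mem (Localization.AtPrime (pointIdeal x)) (pointIdeal x) hmem⟩
  · simp
  · exact List.forall_mem_map.2 fun g hg =>
      (IsLocalization.AtPrime.to_map_mem_maximal_iff _ (pointIdeal x) g).2 (hmem g hg)

variable [Fintype ι]

lemma isSMulRegular_localization_quotient {f : ι → MvPolynomial σ K} {ℓ : MvPolynomial σ K}
    {d : ℕ} (hd : d + (Fintype.card ι + 1) = Fintype.card σ)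
    (hdim : ringKrullDim (MvPolynomial σ K ⧸ Ideal.span (Set.range f) ⊔ Ideal.span {ℓ}) ≤ d)
    {x : σ → K} (hf : ∀ j, eval x (f j) = 0) (hℓ : eval x ℓ = 0) :
    IsSMulRegular (Localization.AtPrime (pointIdeal x) ⧸ (Ideal.span (Set.range f)).map
      (algebraMap _ (Localization.AtPrime (pointIdeal x))))
      (algebraMap _ (Localization.AtPrime (pointIdeal x)) ℓ) := by
  let A := Localization.AtPrime (pointIdeal x)
  have : IsNoetherianRing A :=
    IsLocalization.isNoetherianRing (pointIdeal x).primeCompl A inferInstance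
  let fs : List A := (Finset.univ : Finset ι).toList.map fun j => algebraMap _ A (f j)
  have hfs : Ideal.ofList fs = (Ideal.span (Set.range f)).map (algebraMap _ A) := by
    rw [Ideal.map_span, Ideal.ofList, ← Set.range_comp]
    congr 1
    ext g
    simp [fs]
  have hall : Ideal.ofList (fs ++ [algebraMap _ A ℓ]) =
      (Ideal.span (Set.range f) ⊔ Ideal.span {ℓ}).map (algebraMap _ A) := by
    rw [Ideal.ofList_append, hfs, Ideal.map_sup, Ideal.ofList_singleton,
      Ideal.map_span _ {ℓ}, Set.image_singleton]
  have hmax : ∀ g, eval x g = 0 → algebraMap _ A g ∈ maximalIdeal A := fun g hg =>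
    (IsLocalization.AtPrime.to_map_mem_maximal_iff A (pointIdeal x) g).2 hg
  have hreg : IsWeaklyRegular A (fs ++ [algebraMap _ A ℓ]) := by
    refine HasDepthAtLeast.isWeaklyRegular (d := d) ?_ ?_ ?_
    · rw [List.length_append, List.length_map, Finset.length_toList, Finset.card_univ,
        List.length_singleton, hd]
      exact hasDepthAtLeast_localization_pointIdeal x
    · simpa [fs, or_imp, forall_and] using ⟨fun j => hmax _ (hf j), hmax _ hℓ⟩
    · rw [hall, smul_eq_mul, Ideal.mul_top, Module.supportDim_quotient_eq_ringKrullDim]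
      exact (ringKrullDim_quotient_map_le_of_isLocalization (pointIdeal x).primeCompl _).trans hdim
  rw [isWeaklyRegular_append_iff, isWeaklyRegular_singleton_iff, smul_eq_mul, Ideal.mul_top,
    hfs] at hreg
  exact hreg.2

lemma exists_eval_ne_zero_mul_mem_span_of_mul_mem {f : ι → MvPolynomial σ K} {ℓ : MvPolynomial σ K}
    {d : ℕ} (hd : d + (Fintype.card ι + 1) = Fintype.card σ)
    (hdim : ringKrullDim (MvPolynomial σ K ⧸ Ideal.span (Set.range f) ⊔ Ideal.span {ℓ}) ≤ d)
    {ψ : MvPolynomial σ K} (hψ : ℓ * ψ ∈ Ideal.span (Set.range f)) (x : σ → K) :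
    ∃ s, eval x s ≠ 0 ∧ s * ψ ∈ Ideal.span (Set.range f) := by
  obtain hℓ | hℓ := ne_or_eq (eval x ℓ) 0
  · exact ⟨ℓ, hℓ, hψ⟩
  obtain ⟨j, hj⟩ | hf := exists_or_forall_not fun j => eval x (f j) ≠ 0
  · exact ⟨f j, hj, Ideal.mul_mem_right _ _ (Ideal.subset_span ⟨j, rfl⟩)⟩
  have hψ_loc := (isSMulRegular_quotient_iff_mem_of_smul_mem _ _).1
    (isSMulRegular_localization_quotient hd hdim (fun j => not_not.1 (hf j)) hℓ)
    (algebraMap _ _ ψ)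
    (by rw [smul_eq_mul, ← map_mul]; exact Ideal.mem_map_of_mem _ hψ)
  obtain ⟨s, hs, hsψ⟩ := (IsLocalization.algebraMap_mem_map_algebraMap_iff
    (pointIdeal x).primeCompl _ _ _).1 hψ_loc
  exact ⟨s, hs, hsψ⟩

lemma isSMulRegular_quotient_span_range [IsAlgClosed K] {f : ι → MvPolynomial σ K}
    {ℓ : MvPolynomial σ K} {d : ℕ} (hd : d + (Fintype.card ι + 1) = Fintype.card σ)
    (hdim : ringKrullDim (MvPolynomial σ K ⧸ Ideal.span (Set.range f) ⊔ Ideal.span {ℓ}) ≤ d) :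
    IsSMulRegular (MvPolynomial σ K ⧸ Ideal.span (Set.range f)) ℓ := by
  refine (isSMulRegular_quotient_iff_mem_of_smul_mem _ _).2 fun ψ hψ => ?_
  obtain ⟨k, hk⟩ := exists_pow_mul_mem_of_forall_eval_ne_zero (ℓ := 1) fun x _ =>
    exists_eval_ne_zero_mul_mem_span_of_mul_mem hd hdim hψ x
  rwa [one_pow, one_mul] at hk

end Unmixedness

section VanishingOrder

open Asymptotics Topology

variable {σ 𝕜 : Type*}

lemma coeff_aeval_C_mul_X [CommSemiring 𝕜] (v : σ → 𝕜) (g : MvPolynomial σ 𝕜) (i : ℕ) :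
    (aeval (fun j => Polynomial.C (v j) * Polynomial.X) g).coeff i =
      eval v (homogeneousComponent i g) := by
  induction g using MvPolynomial.induction_on' with
  | monomial s a =>
    have hprod : (s.prod fun j e => (Polynomial.C (v j) * Polynomial.X) ^ e) =
        Polynomial.C (s.prod fun j e => v j ^ e) * Polynomial.X ^ s.degree := by
      simp [Finsupp.prod, mul_pow, Finset.prod_mul_distrib, Finset.prod_pow_eq_pow_sum,
        Finsupp.degree_apply]
    rw [aeval_monomial, hprod, Polynomial.algebraMap_eq, ← mul_assoc, ← Polynomial.C_mul,
      Polynomial.coeff_C_mul_X_pow]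
    split_ifs with h
    · rw [homogeneousComponent_of_mem (isHomogeneous_monomial a h.symm), if_pos rfl, eval_monomial]
    · rw [homogeneousComponent_of_mem (isHomogeneous_monomial a rfl), if_neg h, map_zero]
  | add p q hp hq => simp only [map_add, Polynomial.coeff_add, hp, hq]

lemma eval_aeval_C_mul_X [CommSemiring 𝕜] (v : σ → 𝕜) (g : MvPolynomial σ 𝕜) (t : 𝕜) :
    (aeval (fun j => Polynomial.C (v j) * Polynomial.X) g).eval t = eval (t • v) g := by
  rw [← Polynomial.coe_aeval_eq_eval, ← AlgHom.comp_apply, comp_aeval, aeval_eq_eval]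
  congr 2
  ext j
  simpa using mul_comm (v j) t

variable [NontriviallyNormedField 𝕜]

lemma X_pow_dvd_of_eval_isBigO {k : ℕ} {q : Polynomial 𝕜}
    (h : (fun t => q.eval t) =O[𝓝[≠] 0] fun t => t ^ k) : Polynomial.X ^ k ∣ q := by
  induction k generalizing q with
  | zero => simp
  | succ k ih =>
    have h0 : q.eval 0 = 0 := by
      have hpow : Tendsto (fun t : 𝕜 => t ^ (k + 1)) (𝓝[≠] 0) (𝓝 0) :=
        ((continuous_pow (k + 1)).tendsto' 0 0 (by simp)).mono_left nhdsWithin_le_nhds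
      exact tendsto_nhds_unique ((q.continuous.tendsto 0).mono_left nhdsWithin_le_nhds)
        (h.trans_tendsto hpow)
    obtain ⟨u, rfl⟩ := Polynomial.X_dvd_iff.2 (q.coeff_zero_eq_eval_zero.trans h0)
    rw [pow_succ']
    refine mul_dvd_mul_left _ (ih ?_)
    have hinv : (fun t : 𝕜 => t⁻¹) =O[𝓝[≠] 0] fun t => t⁻¹ := isBigO_refl _ _
    refine (hinv.mul h).congr' ?_ ?_ <;> filter_upwards [self_mem_nhdsWithin] with t ht
    · simp [inv_mul_cancel_left₀ ht]
    · rw [pow_succ', inv_mul_cancel_left₀ ht]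

variable [Fintype σ]

lemma mem_pow_idealOfVars_of_eval_isBigO {k : ℕ} {g : MvPolynomial σ 𝕜}
    (h : (fun y => eval y g) =O[𝓝 0] fun y => ‖y‖ ^ k) : g ∈ idealOfVars σ 𝕜 ^ k := by
  have hcomp : ∀ i < k, homogeneousComponent i g = 0 := by
    refine fun i hi => MvPolynomial.funext fun v => ?_
    rw [← coeff_aeval_C_mul_X, map_zero]
    refine Polynomial.X_pow_dvd_iff.1 (X_pow_dvd_of_eval_isBigO ?_) i hi
    have hline : Tendsto (fun t : 𝕜 => t • v) (𝓝[≠] 0) (𝓝 0) :=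
      (Continuous.tendsto' (by fun_prop) 0 0 (zero_smul 𝕜 v)).mono_left nhdsWithin_le_nhds
    simp only [eval_aeval_C_mul_X]
    refine (h.comp_tendsto hline).trans (IsBigO.of_bound (‖v‖ ^ k) (Eventually.of_forall ?_))
    intro t
    simp [norm_smul, mul_pow, mul_comm]
  refine (mem_pow_idealOfVars_iff' k g).2 fun s hs => ?_
  have hcoeff := congrArg (coeff s) (hcomp s.degree hs)
  rwa [coeff_homogeneousComponent, if_pos rfl, coeff_zero] at hcoeff

lemma mem_pow_pointIdeal_of_eval_isBigO {k : ℕ} {x : σ → 𝕜} {g : MvPolynomial σ 𝕜}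
    (h : (fun y => eval (x + y) g) =O[𝓝 0] fun y => ‖y‖ ^ k) : g ∈ pointIdeal x ^ k := by
  let g₀ : MvPolynomial σ 𝕜 := bind₁ (fun i => C (x i) + X i) g
  have hg₀ : g₀ ∈ idealOfVars σ 𝕜 ^ k := by
    refine mem_pow_idealOfVars_of_eval_isBigO (h.congr_left fun y => ?_)
    simp [g₀, ← aeval_eq_eval, aeval_bind₁, Pi.add_def]
  have hg : bind₁ (fun i => X i - C (x i)) g₀ = g := by
    simp [g₀, bind₁_bind₁]
  have hle : (idealOfVars σ 𝕜).map (bind₁ fun i => X i - C (x i)) ≤ pointIdeal x := by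
    rw [idealOfVars, Ideal.map_span, Ideal.span_le]
    rintro _ ⟨_, ⟨i, rfl⟩, rfl⟩
    simp [RingHom.mem_ker]
  rw [← hg]
  refine Ideal.pow_right_mono hle k ?_
  rw [← Ideal.map_pow]
  exact Ideal.mem_map_of_mem _ hg₀

lemma exists_eval_isBigO_sub_of_analyticAt {h : (σ → 𝕜) → 𝕜} {x : σ → 𝕜}
    (hh : AnalyticAt 𝕜 h x) (k : ℕ) :
    ∃ T : MvPolynomial σ 𝕜, (fun y => h (x + y) - eval (x + y) T) =O[𝓝 0] fun y => ‖y‖ ^ k := by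
  classical
  obtain ⟨p, hp⟩ := hh
  refine ⟨∑ i ∈ Finset.range k, ∑ r : Fin i → σ,
    C (p i fun l => Pi.single (r l) 1) * ∏ l, (X (r l) - C (x (r l))), ?_⟩
  refine (hp.isBigO_sub_partialSum_pow k).congr_left fun y => congrArg (h (x + y) - ·) ?_
  rw [map_sum, FormalMultilinearSeries.partialSum]
  refine Finset.sum_congr rfl fun i _ => ?_
  conv_lhs => rw [pi_eq_sum_univ' y]
  rw [(p i).map_sum, map_sum]
  refine Finset.sum_congr rfl fun r _ => ?_
  rw [ContinuousMultilinearMap.map_smul_univ]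
  simp [mul_comm, map_prod]

end VanishingOrder

section LocalMembership

open Asymptotics Topology

lemma exists_mem_one_sub_mul_mem_of_forall_mem_sup_pow {R : Type*} [CommRing R]
    [IsNoetherianRing R] {I P : Ideal R} {a : R} (h : ∀ k, a ∈ I ⊔ P ^ k) :
    ∃ r ∈ P, (1 - r) * a ∈ I := by
  have hmem : Ideal.Quotient.mk I a ∈ (⨅ k : ℕ, P ^ k • ⊤ : Submodule R (R ⧸ I)) := by
    refine Submodule.mem_iInf _ |>.2 fun k => ?_
    obtain ⟨b, hb, c, hc, rfl⟩ := Submodule.mem_sup.1 (h k)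
    have hmk : Ideal.Quotient.mk I (b + c) = c • (1 : R ⧸ I) := by
      rw [map_add, Ideal.Quotient.eq_zero_iff_mem.2 hb, zero_add, Algebra.smul_def, mul_one,
        Ideal.Quotient.algebraMap_eq]
    exact hmk ▸ Submodule.smul_mem_smul hc trivial
  obtain ⟨⟨r, hr⟩, hra⟩ := (Ideal.mem_iInf_smul_pow_eq_bot_iff P _).1 hmem
  refine ⟨r, hr, ?_⟩
  rw [← Ideal.Quotient.eq_zero_iff_mem, sub_mul, one_mul, map_sub, map_mul, sub_eq_zero]
  exact hra.symm

variable {σ ι 𝕜 : Type*} [Fintype σ] [Fintype ι] [NontriviallyNormedField 𝕜]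

/-- The germ of `φ` at `x` lies in the ideal generated by the `f j` in the ring of germs of
analytic functions at `x`. -/
def MemGermIdeal (f : ι → MvPolynomial σ 𝕜) (φ : MvPolynomial σ 𝕜) (x : σ → 𝕜) : Prop :=
  ∃ h : ι → ((σ → 𝕜) → 𝕜), (∀ j, AnalyticAt 𝕜 (h j) x) ∧
    ∀ᶠ z in nhds x, eval z φ = ∑ j, h j z * eval z (f j)

variable {f : ι → MvPolynomial σ 𝕜} {φ : MvPolynomial σ 𝕜} {x : σ → 𝕜}

lemma memGermIdeal_of_mem_span [CompleteSpace 𝕜] (hφ : φ ∈ Ideal.span (Set.range f))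
    (x : σ → 𝕜) : MemGermIdeal f φ x := by
  obtain ⟨c, rfl⟩ := Ideal.mem_span_range_iff_exists_fun.1 hφ
  exact ⟨fun j z => eval z (c j), fun j => AnalyticOnNhd.eval_mvPolynomial (c j) x trivial,
    Eventually.of_forall fun z => by simp only [map_sum, map_mul]⟩

lemma MemGermIdeal.mem_span_sup_pow (hφ : MemGermIdeal f φ x) (k : ℕ) :
    φ ∈ Ideal.span (Set.range f) ⊔ pointIdeal x ^ k := by
  obtain ⟨h, hh, heq⟩ := hφ
  choose T hT using fun j => exists_eval_isBigO_sub_of_analyticAt (hh j) k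
  have hx : Tendsto (fun y => x + y) (𝓝 0) (𝓝 x) :=
    Continuous.tendsto' (by fun_prop) 0 x (add_zero x)
  have hremainder : φ - ∑ j, T j * f j ∈ pointIdeal x ^ k := by
    refine mem_pow_pointIdeal_of_eval_isBigO ?_
    have heval : (fun y => eval (x + y) (φ - ∑ j, T j * f j)) =ᶠ[𝓝 0]
        fun y => ∑ j, (h j (x + y) - eval (x + y) (T j)) * eval (x + y) (f j) := by
      filter_upwards [hx.eventually heq] with y hy
      simp only [map_sub, map_sum, map_mul, hy, sub_mul, Finset.sum_sub_distrib]
    refine heval.trans_isBigO (IsBigO.fun_sum fun j _ => ?_)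
    have hbounded : (fun y => eval (x + y) (f j)) =O[𝓝 0] fun _ => (1 : ℝ) :=
      (((MvPolynomial.continuous_eval (f j)).tendsto x).comp hx).isBigO_one ℝ
    simpa using (hT j).mul hbounded
  rw [← add_sub_cancel (∑ j, T j * f j) φ]
  exact Submodule.add_mem_sup (Ideal.sum_mem _ fun j _ =>
    Ideal.mul_mem_left _ _ (Ideal.subset_span ⟨j, rfl⟩)) hremainder

lemma MemGermIdeal.exists_eval_ne_zero_mul_mem_span (hφ : MemGermIdeal f φ x) :
    ∃ s, eval x s ≠ 0 ∧ s * φ ∈ Ideal.span (Set.range f) := by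
  obtain ⟨r, hr, hrφ⟩ := exists_mem_one_sub_mul_mem_of_forall_mem_sup_pow hφ.mem_span_sup_pow
  exact ⟨1 - r, by simp [(RingHom.mem_ker).1 hr], hrφ⟩

end LocalMembership

theorem local_membership_at_infinity_general {σ ι 𝕜 : Type*} [Fintype σ] [Fintype ι]
    [NontriviallyNormedField 𝕜] [CompleteSpace 𝕜] [IsAlgClosed 𝕜]
    (f : ι → MvPolynomial σ 𝕜) (ℓ φ : MvPolynomial σ 𝕜) {d : ℕ}
    (hd : d + (Fintype.card ι + 1) = Fintype.card σ)
    (hdim : ringKrullDim (MvPolynomial σ 𝕜 ⧸ Ideal.span (Set.range f) ⊔ Ideal.span {ℓ}) ≤ d)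
    (hφ : ∀ x, eval x ℓ ≠ 0 → MemGermIdeal f φ x) (x : σ → 𝕜) : MemGermIdeal f φ x := by
  obtain ⟨k, hk⟩ := exists_pow_mul_mem_of_forall_eval_ne_zero fun y hy =>
    (hφ y hy).exists_eval_ne_zero_mul_mem_span
  have hreg := (isSMulRegular_quotient_span_range hd hdim).pow k
  exact memGermIdeal_of_mem_span ((isSMulRegular_quotient_iff_mem_of_smul_mem _ _).1 hreg φ hk) x

/-- Local ideal membership across the hyperplane at infinity: let `f_1,…,f_m`
(`m ≤ n`) be homogeneous polynomials on `ℂ^{n+1}`, whose projective zero set `Z` has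
codimension `m` (each irreducible component of the cone has dimension `n+1−m`) and such
that `Z ∩ {z_0 = 0}` has codimension `m+1` in `ℙ^n`. If the homogeneous polynomial `φ`
of degree `r` lies in the ideal generated by `f_1,…,f_m` in the ring of germs of
holomorphic functions at every point of the affine chart `{z_0 ≠ 0}`, then it does so at
every point of `ℂ^{n+1} \ {0}`, i.e. at every point of `ℙ^n` including `{z_0 = 0}`. -/
theorem local_membership_at_infinity (n m r : ℕ) (hmn : m ≤ n)
    (d : Fin m → ℕ) (f : Fin m → MvPolynomial (Fin (n + 1)) ℂ)
    (hf : ∀ j, (f j).IsHomogeneous (d j))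
    (φ : MvPolynomial (Fin (n + 1)) ℂ) (hφ : φ.IsHomogeneous r)
    (hcodim : ∀ p ∈ (Ideal.span (Set.range f)).minimalPrimes,
      ringKrullDim (MvPolynomial (Fin (n + 1)) ℂ ⧸ p) =
        ((n + 1 - m : ℕ) : WithBot (WithTop ℕ)))
    (hcodim_infty : ∀ p ∈ (Ideal.span (Set.range f) ⊔
        Ideal.span {(X 0 : MvPolynomial (Fin (n + 1)) ℂ)}).minimalPrimes,
      ringKrullDim (MvPolynomial (Fin (n + 1)) ℂ ⧸ p) =
        ((n - m : ℕ) : WithBot (WithTop ℕ)))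
    (haffine : ∀ x : Fin (n + 1) → ℂ, x 0 ≠ 0 →
      ∃ h : Fin m → ((Fin (n + 1) → ℂ) → ℂ),
        (∀ j, AnalyticAt ℂ (h j) x) ∧
        ∀ᶠ z in nhds x, eval z φ = ∑ j, h j z * eval z (f j)) :
    ∀ x : Fin (n + 1) → ℂ, x ≠ 0 →
      ∃ h : Fin m → ((Fin (n + 1) → ℂ) → ℂ),
        (∀ j, AnalyticAt ℂ (h j) x) ∧
        ∀ᶠ z in nhds x, eval z φ = ∑ j, h j z * eval z (f j) := by
  have hdim := ringKrullDim_quotient_le_of_forall_minimalPrimes fun p hp => (hcodim_infty p hp).le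
  exact fun x _ => local_membership_at_infinity_general f (X 0) φ (by simp; omega) hdim
    (fun y hy => haffine y (by rwa [eval_X] at hy)) x
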